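/- For any two partitions λ and μ, the following identity holds in ℚ(q, Q_s, Q_t): X(λ, μ; Q_s, Q_t) = q^{−Σ_{i≥1} λ'_i μ'_i} · Q_s^{|μ|} Q_t^{|λ|} · ∏_{(i,j)∈[λ]} (q^{h_{i,j}^{λ,μ}} Q_s Q_t^{−1} − 1) · ∏_{(i,j)∈[μ]} (q^{h_{i,j}^{μ,λ}} Q_t Q_s^{−1} − 1). -/

import Mathlib

/-- A partition, encoded as a weakly decreasing, eventually-zero sequence of
natural numbers; `parts i` is the `(i+1)`-st part `λ_{i+1}` (0-indexed rows). -/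
structure Ptn where
  parts : ℕ → ℕ
  antitone' : Antitone parts
  eventually_zero : ∃ N, ∀ i, N ≤ i → parts i = 0

namespace Ptn

/-- `conj p k` is the conjugate-partition part `λ'_{k+1} = #{i ≥ 1 : λ_i ≥ k+1}`. -/
noncomputable def conj (p : Ptn) (k : ℕ) : ℕ := Nat.card {i : ℕ // k < p.parts i}

/-- `|λ| = Σ_{i ≥ 1} λ_i`. -/
noncomputable def size (p : Ptn) : ℕ := ∑ᶠ i, p.parts i

/-- `n(λ) = Σ_{i ≥ 1} (i-1) λ_i`. -/
noncomputable def nn (p : Ptn) : ℕ := ∑ᶠ i, i * p.parts i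

/-- The empty partition. -/
def empty : Ptn := ⟨fun _ => 0, fun _ _ _ => le_rfl, ⟨0, fun _ _ => rfl⟩⟩

end Ptn

/-- The generalised hook length `h_{i,j}^{λ,μ} = λ_i - i + μ'_j - j + 1`, for the node
in (0-indexed) row `i` and column `j`, i.e. the 1-indexed node `(i+1, j+1)`. -/
noncomputable def ghook (lam mu : Ptn) (i j : ℕ) : ℤ :=
  (lam.parts i : ℤ) - (i + 1) + (mu.conj j : ℤ) - (j + 1) + 1

/-- The rational function field `ℚ(q, Q_s, Q_t)` in three indeterminates. -/
noncomputable abbrev K3 : Type := FractionRing (MvPolynomial (Fin 3) ℚ)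

/-- The indeterminate `q`. -/
noncomputable def q3 : K3 := algebraMap (MvPolynomial (Fin 3) ℚ) K3 (MvPolynomial.X 0)

/-- The indeterminate `Q_s`. -/
noncomputable def Qs3 : K3 := algebraMap (MvPolynomial (Fin 3) ℚ) K3 (MvPolynomial.X 1)

/-- The indeterminate `Q_t`. -/
noncomputable def Qt3 : K3 := algebraMap (MvPolynomial (Fin 3) ℚ) K3 (MvPolynomial.X 2)

/-- The quantity `X(λ, μ; Q_s, Q_t) = ∏_{(i,j)∈[μ]} (q^{j-i} Q_t - Q_s) ·
∏_{(i,j)∈[λ]} ( (q^{j-i} Q_s - q^{μ_1} Q_t) ·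
∏_{k=1}^{μ_1} (q^{j-i} Q_s - q^{k-1-μ'_k} Q_t)/(q^{j-i} Q_s - q^{k-μ'_k} Q_t) )`. -/
noncomputable def Xst {K : Type*} [Field K] (q Qs Qt : K) (lam mu : Ptn) : K :=
  (∏ᶠ i, ∏ j ∈ Finset.range (mu.parts i), (q ^ ((j : ℤ) - (i : ℤ)) * Qt - Qs)) *
  ∏ᶠ i, ∏ j ∈ Finset.range (lam.parts i),
    ((q ^ ((j : ℤ) - (i : ℤ)) * Qs - q ^ (mu.parts 0 : ℤ) * Qt) *
      ∏ k ∈ Finset.range (mu.parts 0),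
        (q ^ ((j : ℤ) - (i : ℤ)) * Qs - q ^ (((k : ℤ) + 1) - 1 - (mu.conj k : ℤ)) * Qt) /
          (q ^ ((j : ℤ) - (i : ℤ)) * Qs - q ^ (((k : ℤ) + 1) - (mu.conj k : ℤ)) * Qt))

namespace Ptn

theorem lt_conj_iff (p : Ptn) (i j : ℕ) : i < p.conj j ↔ j < p.parts i := by
  have hex : ∃ n, p.parts n ≤ j := by
    obtain ⟨N, hN⟩ := p.eventually_zero
    exact ⟨N, by simp [hN N le_rfl]⟩
  classical
  have key : ∀ i, j < p.parts i ↔ i < Nat.find hex := by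
    intro i
    rw [Nat.lt_find_iff]
    constructor
    · intro h m hm
      have := p.antitone' hm
      omega
    · intro h
      simpa using h i le_rfl
  have hcard : p.conj j = Nat.find hex := by
    unfold conj
    simp only [key]
    have : Nat.card {i : ℕ // i < Nat.find hex} = Nat.card (Fin (Nat.find hex)) :=
      Nat.card_congr Fin.equivSubtype.symm
    simpa using this
  rw [hcard, key]

theorem conj_antitone (p : Ptn) : Antitone p.conj := by
  intro a b hab
  by_contra! h
  have h1 := (p.lt_conj_iff _ _).1 h
  exact lt_irrefl _ ((p.lt_conj_iff _ _).2 (hab.trans_lt h1))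

theorem conj_eq_zero (p : Ptn) {k : ℕ} (h : p.parts 0 ≤ k) : p.conj k = 0 := by
  by_contra h0
  have := (p.lt_conj_iff 0 k).1 (Nat.pos_of_ne_zero h0)
  omega

/-- Any product over the rows of `p` is supported on finitely many rows. -/
theorem finprod_rows {M : Type*} [CommMonoid M] (p : Ptn) {N : ℕ}
    (hN : ∀ i, N ≤ i → p.parts i = 0) (g : ℕ → M) (hg : ∀ i, p.parts i = 0 → g i = 1) :
    ∏ᶠ i, g i = ∏ i ∈ Finset.range N, g i := by
  apply finprod_eq_prod_of_mulSupport_subset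
  intro i hi
  by_contra h
  simp only [Finset.coe_range, Set.mem_Iio, not_lt] at h
  exact hi (hg i (hN i h))

/-- A product over the nodes of `p` may be taken row by row or column by column. -/
theorem prod_rows_eq_prod_columns {M : Type*} [CommMonoid M] (p : Ptn) {N C : ℕ}
    (hN : ∀ i, N ≤ i → p.parts i = 0) (hC : p.parts 0 ≤ C) (f : ℕ → ℕ → M) :
    ∏ i ∈ Finset.range N, ∏ j ∈ Finset.range (p.parts i), f i j =
      ∏ j ∈ Finset.range C, ∏ i ∈ Finset.range (p.conj j), f i j := by
  apply Finset.prod_comm'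
  intro i j
  simp only [Finset.mem_range, lt_conj_iff]
  constructor
  · rintro ⟨_, h⟩
    exact ⟨h, h.trans_le ((p.antitone' (Nat.zero_le i)).trans hC)⟩
  · rintro ⟨h, _⟩
    refine ⟨?_, h⟩
    by_contra! hi
    simp [hN i hi] at h

end Ptn

section Field

variable {K : Type*} [Field K] {q x y : K}

theorem prod_Ico_div_of_ne_zero {f : ℕ → K} (hf : ∀ i, f i ≠ 0) {m n : ℕ} (hmn : m ≤ n) :
    ∏ i ∈ Finset.Ico m n, f (i + 1) / f i = f n / f m := by
  induction n, hmn using Nat.le_induction with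
  | base => simp [div_self (hf m)]
  | succ n hmn ih =>
    rw [Finset.prod_Ico_succ_top hmn, ih, mul_comm, div_mul_div_cancel₀ (hf n)]

/-- The factor of `X(λ, μ)` at a node of `λ`, with `z = q ^ (j - i) * Q_s`, can be computed from
the rows of `μ` longer than `a` and the first `a` columns of `μ`. -/
theorem node_factor_eq (mu : Ptn) (z : K) (hz : ∀ n : ℤ, z - q ^ n * y ≠ 0) (a : ℕ) :
    (z - q ^ (mu.parts 0 : ℤ) * y) * ∏ k ∈ Finset.range (mu.parts 0),
        (z - q ^ (((k : ℤ) + 1) - 1 - (mu.conj k : ℤ)) * y) /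
          (z - q ^ (((k : ℤ) + 1) - (mu.conj k : ℤ)) * y) =
      (∏ i ∈ Finset.range (mu.conj a), (z - q ^ ((mu.parts i : ℤ) - i) * y) /
          (z - q ^ ((mu.parts i : ℤ) - i - 1) * y)) *
        (z - q ^ ((a : ℤ) - mu.conj a) * y) * ∏ k ∈ Finset.range a,
        (z - q ^ (((k : ℤ) + 1) - 1 - (mu.conj k : ℤ)) * y) /
          (z - q ^ (((k : ℤ) + 1) - (mu.conj k : ℤ)) * y) := by
  set E : ℕ → K := fun a => (∏ i ∈ Finset.range (mu.conj a), (z - q ^ ((mu.parts i : ℤ) - i) * y) /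
          (z - q ^ ((mu.parts i : ℤ) - i - 1) * y)) *
        (z - q ^ ((a : ℤ) - mu.conj a) * y) * ∏ k ∈ Finset.range a,
        (z - q ^ (((k : ℤ) + 1) - 1 - (mu.conj k : ℤ)) * y) /
          (z - q ^ (((k : ℤ) + 1) - (mu.conj k : ℤ)) * y) with hE
  have hstep : ∀ a, E (a + 1) = E a := by
    intro a
    have hle : mu.conj (a + 1) ≤ mu.conj a := mu.conj_antitone (Nat.le_succ a)
    have htel : ∏ i ∈ Finset.Ico (mu.conj (a + 1)) (mu.conj a),
        (z - q ^ ((mu.parts i : ℤ) - i) * y) / (z - q ^ ((mu.parts i : ℤ) - i - 1) * y) =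
        (z - q ^ ((a : ℤ) + 1 - mu.conj (a + 1)) * y) / (z - q ^ ((a : ℤ) + 1 - mu.conj a) * y) := by
      have hrow : ∀ i ∈ Finset.Ico (mu.conj (a + 1)) (mu.conj a),
          (z - q ^ ((mu.parts i : ℤ) - i) * y) / (z - q ^ ((mu.parts i : ℤ) - i - 1) * y) =
          (z - q ^ ((a : ℤ) + 1 - (i + 1 : ℕ)) * y)⁻¹ / (z - q ^ ((a : ℤ) + 1 - i) * y)⁻¹ := by
        intro i hi
        rw [Finset.mem_Ico, mu.lt_conj_iff, ← not_lt, mu.lt_conj_iff] at hi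
        have : mu.parts i = a + 1 := by omega
        rw [this, inv_div_inv]
        push_cast
        rw [sub_sub ((a : ℤ) + 1)]
      rw [Finset.prod_congr rfl hrow, prod_Ico_div_of_ne_zero
        (f := fun i : ℕ => (z - q ^ ((a : ℤ) + 1 - i) * y)⁻¹)
        (fun i => inv_ne_zero (hz _)) hle, inv_div_inv]
    simp only [hE]
    rw [← Finset.prod_range_mul_prod_Ico _ hle, htel, Finset.prod_range_succ]
    push_cast
    rw [add_sub_cancel_right]
    ring
  have hconst : ∀ a, E a = E 0 := by
    intro a
    induction a with
    | zero => rfl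
    | succ n ih => rw [hstep, ih]
  change _ = E a
  rw [hconst a, ← hconst (mu.parts 0)]
  simp [hE, mu.conj_eq_zero le_rfl]

/-- The product of the factors of `X(λ, μ)` over the first `a` nodes of row `r`. -/
theorem row_factor_eq (hq : q ≠ 0) (h : ∀ n : ℤ, q ^ n * x - y ≠ 0) (mu : Ptn) (r a : ℕ) :
    ∏ j ∈ Finset.range a, ((q ^ ((j : ℤ) - (r : ℤ)) * x - q ^ (mu.parts 0 : ℤ) * y) *
      ∏ k ∈ Finset.range (mu.parts 0),
        (q ^ ((j : ℤ) - (r : ℤ)) * x - q ^ (((k : ℤ) + 1) - 1 - (mu.conj k : ℤ)) * y) /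
          (q ^ ((j : ℤ) - (r : ℤ)) * x - q ^ (((k : ℤ) + 1) - (mu.conj k : ℤ)) * y)) =
    (∏ j ∈ Finset.range a, (q ^ ((a : ℤ) - r + mu.conj j - j - 1) * x - y)) *
      ∏ j ∈ Finset.range a, (q ^ (-(mu.conj j : ℤ)) * ∏ i ∈ Finset.range (mu.conj j),
        (q ^ ((mu.parts i : ℤ) - i - j - 1 + (r + 1 : ℕ)) * y - x) /
          (q ^ ((mu.parts i : ℤ) - i - j - 1 + r) * y - x)) := by
  have shift : ∀ m n : ℤ, q ^ m * x - q ^ n * y = q ^ n * (q ^ (m - n) * x - y) := by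
    intro m n
    rw [mul_sub, ← mul_assoc, ← zpow_add₀ hq]
    simp
  have shift' : ∀ m n : ℤ, q ^ m * x - q ^ n * y = -q ^ m * (q ^ (n - m) * y - x) := by
    intro m n
    rw [neg_mul, ← neg_sub, neg_inj, mul_sub, ← mul_assoc, ← zpow_add₀ hq]
    simp
  have hne : ∀ m n : ℤ, q ^ m * x - q ^ n * y ≠ 0 := fun m n => by
    rw [shift]
    exact mul_ne_zero (zpow_ne_zero _ hq) (h _)
  induction a with
  | zero => simp
  | succ a ih =>
    rw [Finset.prod_range_succ, ih, node_factor_eq mu _ (hne _) a,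
      Finset.prod_range_succ (fun j : ℕ => q ^ (-(mu.conj j : ℤ)) * _),
      Finset.prod_range_succ (fun j : ℕ => q ^ (((a + 1 : ℕ) : ℤ) - r + mu.conj j - j - 1) * x - y)]
    have hV : ∏ i ∈ Finset.range (mu.conj a),
        (q ^ ((mu.parts i : ℤ) - i - a - 1 + (r + 1 : ℕ)) * y - x) /
          (q ^ ((mu.parts i : ℤ) - i - a - 1 + r) * y - x) =
        ∏ i ∈ Finset.range (mu.conj a),
          (q ^ ((a : ℤ) - r) * x - q ^ ((mu.parts i : ℤ) - i) * y) /
          (q ^ ((a : ℤ) - r) * x - q ^ ((mu.parts i : ℤ) - i - 1) * y) := by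
      refine Finset.prod_congr rfl fun i _ => ?_
      rw [shift', shift', mul_div_mul_left _ _ (neg_ne_zero.2 (zpow_ne_zero _ hq))]
      push_cast
      ring_nf
    have hlast : q ^ (((a + 1 : ℕ) : ℤ) - r + mu.conj a - a - 1) * x - y =
        q ^ ((mu.conj a : ℤ) - a) *
          (q ^ ((a : ℤ) - r) * x - q ^ ((a : ℤ) - mu.conj a) * y) := by
      rw [shift, ← mul_assoc, ← zpow_add₀ hq]
      push_cast
      ring_nf
      simp
    have hU : ∏ j ∈ Finset.range a, (q ^ (((a + 1 : ℕ) : ℤ) - r + mu.conj j - j - 1) * x - y) =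
        q ^ (a : ℤ) * (∏ j ∈ Finset.range a, (q ^ ((a : ℤ) - r + mu.conj j - j - 1) * x - y)) *
        ∏ k ∈ Finset.range a,
        (q ^ ((a : ℤ) - r) * x - q ^ (((k : ℤ) + 1) - 1 - (mu.conj k : ℤ)) * y) /
          (q ^ ((a : ℤ) - r) * x - q ^ (((k : ℤ) + 1) - (mu.conj k : ℤ)) * y) := by
      have hpow : q ^ (a : ℤ) = ∏ _j ∈ Finset.range a, q := by simp
      rw [hpow, ← Finset.prod_mul_distrib, ← Finset.prod_mul_distrib]
      refine Finset.prod_congr rfl fun j _ => ?_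
      rw [shift _ ((j : ℤ) + 1 - 1 - _), shift _ ((j : ℤ) + 1 - _),
        show (j : ℤ) + 1 - mu.conj j = ((j : ℤ) + 1 - 1 - mu.conj j) + 1 by ring, zpow_add_one₀ hq,
        show (a : ℤ) - r + mu.conj j - j - 1 = a - r - (j + 1 - 1 - mu.conj j + 1) by ring,
        show ((a + 1 : ℕ) : ℤ) - r + mu.conj j - j - 1 = a - r - (j + 1 - 1 - mu.conj j) by
          push_cast; ring]
      have h1 := h ((a : ℤ) - r - (j + 1 - 1 - mu.conj j + 1))
      have h2 := zpow_ne_zero ((j : ℤ) + 1 - 1 - mu.conj j) hq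
      rw [mul_assoc (q ^ _) q, mul_div_mul_left _ _ h2, mul_div_assoc', eq_div_iff (mul_ne_zero hq h1)]
      ring
    rw [hV, hlast, hU]
    have hcancel : q ^ (a : ℤ) * (q ^ ((mu.conj a : ℤ) - a) * q ^ (-(mu.conj a : ℤ))) = 1 := by
      rw [← zpow_add₀ hq, ← zpow_add₀ hq]
      ring_nf
      simp
    linear_combination (-(∏ j ∈ Finset.range a,
        (q ^ ((a : ℤ) - r + mu.conj j - j - 1) * x - y)) *
      (∏ j ∈ Finset.range a, (q ^ (-(mu.conj j : ℤ)) * ∏ i ∈ Finset.range (mu.conj j),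
        (q ^ ((mu.parts i : ℤ) - i - j - 1 + (r + 1 : ℕ)) * y - x) /
          (q ^ ((mu.parts i : ℤ) - i - j - 1 + r) * y - x))) *
      ((∏ i ∈ Finset.range (mu.conj a),
          (q ^ ((a : ℤ) - r) * x - q ^ ((mu.parts i : ℤ) - i) * y) /
          (q ^ ((a : ℤ) - r) * x - q ^ ((mu.parts i : ℤ) - i - 1) * y)) *
        (q ^ ((a : ℤ) - r) * x - q ^ ((a : ℤ) - mu.conj a) * y) * ∏ k ∈ Finset.range a,
        (q ^ ((a : ℤ) - r) * x - q ^ (((k : ℤ) + 1) - 1 - (mu.conj k : ℤ)) * y) /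
          (q ^ ((a : ℤ) - r) * x - q ^ (((k : ℤ) + 1) - (mu.conj k : ℤ)) * y))) * hcancel

/-- Clearing denominators in a product over the nodes of `p`. -/
theorem pow_size_mul_finprod (p : Ptn) (hy : y ≠ 0) (e : ℕ → ℕ → ℤ) {N : ℕ}
    (hN : ∀ i, N ≤ i → p.parts i = 0) :
    y ^ p.size * ∏ᶠ i, ∏ j ∈ Finset.range (p.parts i), (q ^ e i j * x * y⁻¹ - 1) =
      ∏ i ∈ Finset.range N, ∏ j ∈ Finset.range (p.parts i), (q ^ e i j * x - y) := by
  have hsize : p.size = ∑ i ∈ Finset.range N, p.parts i := by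
    apply finsum_eq_sum_of_support_subset
    intro i hi
    by_contra h
    simp only [Finset.coe_range, Set.mem_Iio, not_lt] at h
    exact hi (hN i h)
  rw [p.finprod_rows hN _ (fun i hi => by simp [hi]), hsize, ← Finset.prod_pow_eq_pow_sum,
    ← Finset.prod_mul_distrib]
  refine Finset.prod_congr rfl fun i _ => ?_
  rw [← Finset.card_range (p.parts i), ← Finset.prod_const, Finset.card_range,
    ← Finset.prod_mul_distrib]
  refine Finset.prod_congr rfl fun j _ => ?_
  field_simp

theorem zpow_neg_finsum_conj (lam mu : Ptn) {N : ℕ}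
    (hN : ∀ i, N ≤ i → lam.parts i = 0) :
    q ^ (-((∑ᶠ k, lam.conj k * mu.conj k : ℕ) : ℤ)) =
      ∏ r ∈ Finset.range N, ∏ j ∈ Finset.range (lam.parts r), q ^ (-(mu.conj j : ℤ)) := by
  have hsum : ∑ᶠ k, lam.conj k * mu.conj k =
      ∑ k ∈ Finset.range (lam.parts 0), lam.conj k * mu.conj k := by
    apply finsum_eq_sum_of_support_subset
    intro i hi
    by_contra h
    simp only [Finset.coe_range, Set.mem_Iio, not_lt] at h
    exact hi (by simp [lam.conj_eq_zero h])
  rw [lam.prod_rows_eq_prod_columns hN le_rfl, hsum, zpow_neg, zpow_natCast,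
    ← Finset.prod_pow_eq_pow_sum, ← Finset.prod_inv_distrib]
  refine Finset.prod_congr rfl fun j _ => ?_
  rw [Finset.prod_const, Finset.card_range, zpow_neg, zpow_natCast, inv_pow, ← pow_mul, mul_comm]

/-- The product of the `μ`-factors, obtained from its value at `λ = ∅` row by row in `λ`. -/
theorem prod_hook_eq (lam mu : Ptn) (h : ∀ n : ℤ, q ^ n * y - x ≠ 0) {N L : ℕ}
    (hN : ∀ i, N ≤ i → lam.parts i = 0) (hL : ∀ i, L ≤ i → mu.parts i = 0) :
    ∏ i ∈ Finset.range L, ∏ j ∈ Finset.range (mu.parts i), (q ^ ghook mu lam i j * y - x) =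
      (∏ i ∈ Finset.range L, ∏ j ∈ Finset.range (mu.parts i),
        (q ^ ((j : ℤ) - (i : ℤ)) * y - x)) *
      ∏ r ∈ Finset.range N, ∏ j ∈ Finset.range (lam.parts r), ∏ i ∈ Finset.range (mu.conj j),
        (q ^ ((mu.parts i : ℤ) - i - j - 1 + (r + 1 : ℕ)) * y - x) /
          (q ^ ((mu.parts i : ℤ) - i - j - 1 + r) * y - x) := by
  have hrefl : ∏ i ∈ Finset.range L, ∏ j ∈ Finset.range (mu.parts i),
        (q ^ ((j : ℤ) - (i : ℤ)) * y - x) =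
      ∏ i ∈ Finset.range L, ∏ j ∈ Finset.range (mu.parts i),
        (q ^ ((mu.parts i : ℤ) - i - j - 1 + (0 : ℕ)) * y - x) := by
    refine Finset.prod_congr rfl fun i _ => ?_
    rw [← Finset.prod_range_reflect]
    refine Finset.prod_congr rfl fun j hj => ?_
    rw [Finset.mem_range] at hj
    congr 3
    omega
  set C := max (lam.parts 0) (mu.parts 0)
  rw [hrefl, mu.prod_rows_eq_prod_columns hL (le_max_right _ _ : _ ≤ C),
    mu.prod_rows_eq_prod_columns hL (le_max_right _ _ : _ ≤ C),
    lam.prod_rows_eq_prod_columns hN (le_max_left _ _ : _ ≤ C), ← Finset.prod_mul_distrib]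
  refine Finset.prod_congr rfl fun j _ => ?_
  rw [Finset.prod_comm, ← Finset.prod_mul_distrib]
  refine Finset.prod_congr rfl fun i _ => ?_
  rw [Finset.range_eq_Ico, prod_Ico_div_of_ne_zero
    (f := fun r : ℕ => q ^ ((mu.parts i : ℤ) - i - j - 1 + (r : ℕ)) * y - x)
    (fun _ => h _) (Nat.zero_le _),
    mul_div_cancel₀ _ (h _)]
  unfold ghook
  congr 3
  ring

theorem Xst_eq (hq : q ≠ 0) (hx : x ≠ 0) (hy : y ≠ 0) (h : ∀ n : ℤ, q ^ n * x - y ≠ 0)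
    (h' : ∀ n : ℤ, q ^ n * y - x ≠ 0) (lam mu : Ptn) :
    Xst q x y lam mu
    = q ^ (-((∑ᶠ k, lam.conj k * mu.conj k : ℕ) : ℤ)) * x ^ mu.size * y ^ lam.size *
        (∏ᶠ i, ∏ j ∈ Finset.range (lam.parts i), (q ^ (ghook lam mu i j) * x * y⁻¹ - 1)) *
        (∏ᶠ i, ∏ j ∈ Finset.range (mu.parts i), (q ^ (ghook mu lam i j) * y * x⁻¹ - 1)) := by
  obtain ⟨N, hN⟩ := lam.eventually_zero
  obtain ⟨L, hL⟩ := mu.eventually_zero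
  have hlam := pow_size_mul_finprod (q := q) (x := x) lam hy (ghook lam mu) hN
  have hmu := pow_size_mul_finprod (q := q) (x := y) mu hx (ghook mu lam) hL
  have hrows : ∀ r, ∏ j ∈ Finset.range (lam.parts r), (q ^ ghook lam mu r j * x - y) =
      ∏ j ∈ Finset.range (lam.parts r),
        (q ^ ((lam.parts r : ℤ) - r + mu.conj j - j - 1) * x - y) := by
    intro r
    refine Finset.prod_congr rfl fun j _ => ?_
    unfold ghook
    congr 3
    ring
  calc Xst q x y lam mu
      = _ * _ := rfl
    _ = q ^ (-((∑ᶠ k, lam.conj k * mu.conj k : ℕ) : ℤ)) *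
        (∏ i ∈ Finset.range N, ∏ j ∈ Finset.range (lam.parts i), (q ^ ghook lam mu i j * x - y)) *
        (∏ i ∈ Finset.range L, ∏ j ∈ Finset.range (mu.parts i),
          (q ^ ghook mu lam i j * y - x)) := by
      rw [mu.finprod_rows hL _ (fun i hi => by simp [hi]),
        lam.finprod_rows hN _ (fun i hi => by simp [hi]), prod_hook_eq lam mu h' hN hL,
        zpow_neg_finsum_conj lam mu hN]
      simp only [row_factor_eq hq h, hrows, Finset.prod_mul_distrib]
      ring
    _ = _ := by
      rw [← hlam, ← hmu]
      ring

end Field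

/-- The ratio of two indeterminates other than `q` is not a power of `q`. -/
theorem zpow_mul_sub_ne_zero {a b : Fin 3} (ha : a ≠ 0) (hab : a ≠ b)
    (n : ℤ) :
    q3 ^ n * algebraMap (MvPolynomial (Fin 3) ℚ) K3 (MvPolynomial.X a) -
      algebraMap (MvPolynomial (Fin 3) ℚ) K3 (MvPolynomial.X b) ≠ 0 := by
  have hinj := IsFractionRing.injective (MvPolynomial (Fin 3) ℚ) K3
  have hq : q3 ≠ 0 := by
    unfold q3
    exact (map_ne_zero_iff _ hinj).2 (MvPolynomial.X_ne_zero _)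
  intro h
  rw [sub_eq_zero] at h
  have hpoly : ∀ (k l : ℕ), (MvPolynomial.X 0 ^ k * MvPolynomial.X a : MvPolynomial (Fin 3) ℚ) ≠
      MvPolynomial.X 0 ^ l * MvPolynomial.X b := by
    intro k l hkl
    have := congrArg (MvPolynomial.eval (fun i => if i = a then (0 : ℚ) else 1)) hkl
    simp [ha.symm, hab.symm] at this
  obtain ⟨k, rfl | rfl⟩ := n.eq_nat_or_neg
  · apply hpoly k 0
    apply hinj
    simpa [q3] using h
  · apply hpoly 0 k
    apply hinj
    rw [zpow_neg, zpow_natCast, inv_mul_eq_iff_eq_mul₀ (pow_ne_zero _ hq)] at h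
    simpa [q3] using h

/-- For any two partitions `λ, μ`, in `ℚ(q, Q_s, Q_t)`:
`X(λ,μ;Q_s,Q_t) = q^{-Σ_i λ'_i μ'_i} Q_s^{|μ|} Q_t^{|λ|}
  ∏_{(i,j)∈[λ]} (q^{h^{λ,μ}_{i,j}} Q_s Q_t⁻¹ - 1) ∏_{(i,j)∈[μ]} (q^{h^{μ,λ}_{i,j}} Q_t Q_s⁻¹ - 1)`. -/
theorem stmt5 (lam mu : Ptn) :
    Xst q3 Qs3 Qt3 lam mu
    = q3 ^ (-((∑ᶠ k, lam.conj k * mu.conj k : ℕ) : ℤ)) * Qs3 ^ mu.size * Qt3 ^ lam.size *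
        (∏ᶠ i, ∏ j ∈ Finset.range (lam.parts i), (q3 ^ (ghook lam mu i j) * Qs3 * Qt3⁻¹ - 1)) *
        (∏ᶠ i, ∏ j ∈ Finset.range (mu.parts i), (q3 ^ (ghook mu lam i j) * Qt3 * Qs3⁻¹ - 1)) := by
  have hinj := IsFractionRing.injective (MvPolynomial (Fin 3) ℚ) K3
  have hne : ∀ a, algebraMap (MvPolynomial (Fin 3) ℚ) K3 (MvPolynomial.X a) ≠ 0 := fun a =>
    (map_ne_zero_iff _ hinj).2 (MvPolynomial.X_ne_zero _)
  exact Xst_eq (hne 0) (hne 1) (hne 2)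
    (zpow_mul_sub_ne_zero (by decide) (by decide))
    (zpow_mul_sub_ne_zero (by decide) (by decide)) lam mu
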